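/- arXiv:2505.10077 — 2 statements merged into one kernel-verified Lean document; each statement's English description precedes it below -/
import Mathlib

section
/- Let $p$ be a prime number and let $\mu$ be the Haar measure on the additive group $\mathbb{Q}_p$ normalized so that $\mu(\mathbb{Z}_p) = 1$; let $\mu^2 = \mu \times \mu$ on $\mathbb{Q}_p^2$. Then $\int_{R} \big(|x|_p \cdot \max\{1, |y|_p\} \cdot \max\{|y - 1|_p, |x - 1|_p\}\big)^{-1} \, d\mu^2(x, y) = 1 + \frac{4}{p}$, where $R = \{(x,y) \in \mathbb{Q}_p^2 : |x|_p \ge 1\} \cup \{(x,y) \in \mathbb{Q}_p^2 : |y|_p \le |x|_p < 1 \text{ and } x \ne 0\}$ and $|\cdot|_p$ is the $p$-adic absolute value. -/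
open MeasureTheory

/-!
Everything is computed in `ℝ≥0∞` by Tonelli's theorem. Scaling shows that a ball of radius `‖x‖` has
measure `‖x‖`, and cutting `{y | ‖x‖ ≤ ‖y‖}` into spheres gives
`∫_{‖x‖ ≤ ‖y‖} ‖y‖⁻² = ‖x‖⁻¹` as a geometric series. By the ultrametric inequality
`max{|y-1|,|x-1|} = max{1,|x|,|y|}` unless `max{|x|,|y|} = 1`, so the density is a product of powers
of `|x|` and `|y|` on each of the four regions `1 ≤ |x| < |y|`, `|y| ≤ 1 < |x|`, `1 < |y| ≤ |x|` and
`|y| ≤ |x| < 1`, which contribute `1/p` each. What remains is `|x| = 1`, `|y| ≤ 1`, where the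
density is `max{|y-1|,|x-1|}⁻¹`: the part `|y-1| ≤ |x-1|` contributes `1 - 1/p`, the part
`|x-1| < |y-1|` contributes `1/p`.
-/

open Metric
open scoped NNReal ENNReal Pointwise

section Norm

variable {p : ℕ} [Fact p.Prime]

theorem enorm_padic_p : ‖(p : ℚ_[p])‖ₑ = (p : ℝ≥0∞)⁻¹ := by
  have hp : (0 : ℝ) < p := mod_cast (Fact.out : p.Prime).pos
  rw [← ofReal_norm, Padic.norm_p, ENNReal.ofReal_inv_of_pos hp, ENNReal.ofReal_natCast]

theorem padic_norm_lt_norm_iff_mul {x y : ℚ_[p]} (hx : x ≠ 0) : ‖y‖ < ‖x‖ ↔ ‖y‖ ≤ ‖p * x‖ := by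
  have hp : (p : ℝ) ≠ 0 := mod_cast (Fact.out : p.Prime).ne_zero
  rw [norm_mul, Padic.norm_p, Padic.norm_eq_zpow_neg_valuation hx,
    Padic.norm_lt_pow_iff_norm_le_pow_sub_one, zpow_sub_one₀ hp, mul_comm]

theorem padic_norm_lt_norm_iff_inv_mul {x y : ℚ_[p]} (hx : x ≠ 0) :
    ‖x‖ < ‖y‖ ↔ ‖(p : ℚ_[p])⁻¹ * x‖ ≤ ‖y‖ := by
  have hp : (p : ℚ_[p]) ≠ 0 := mod_cast (Fact.out : p.Prime).ne_zero
  rw [← not_iff_not, not_lt, not_le, padic_norm_lt_norm_iff_mul (by positivity),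
    mul_inv_cancel_left₀ hp]

theorem exists_padic_norm_eq_of_norm_le {x y : ℚ_[p]} (hx : x ≠ 0) (hxy : ‖x‖ ≤ ‖y‖) :
    ∃ n : ℕ, ‖y‖ = ‖(p : ℚ_[p])⁻¹ ^ n * x‖ := by
  have hp : (1 : ℝ) < p := mod_cast (Fact.out : p.Prime).one_lt
  have hy : y ≠ 0 := norm_pos_iff.1 ((norm_pos_iff.2 hx).trans_le hxy)
  simp only [norm_mul, norm_pow, norm_inv, Padic.norm_p, inv_inv,
    Padic.norm_eq_zpow_neg_valuation hx, Padic.norm_eq_zpow_neg_valuation hy] at hxy ⊢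
  rw [zpow_le_zpow_iff_right₀ hp] at hxy
  obtain ⟨n, hn⟩ := Int.eq_ofNat_of_zero_le (sub_nonneg.2 hxy)
  refine ⟨n, ?_⟩
  rw [← zpow_natCast, ← zpow_add₀ (by positivity), ← hn, sub_add_cancel]

theorem setOf_le_padic_norm_eq_iUnion_sphere {x : ℚ_[p]} (hx : x ≠ 0) :
    {y : ℚ_[p] | ‖x‖ ≤ ‖y‖} = ⋃ n : ℕ, sphere 0 ‖(p : ℚ_[p])⁻¹ ^ n * x‖ := by
  have hp : (1 : ℝ) ≤ p := mod_cast (Fact.out : p.Prime).one_le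
  ext y
  simp only [Set.mem_iUnion, mem_sphere_zero_iff_norm]
  refine ⟨exists_padic_norm_eq_of_norm_le hx, fun ⟨n, hn⟩ => ?_⟩
  rw [Set.mem_ofPred_eq, hn]
  simpa using le_mul_of_one_le_left (norm_nonneg x) (one_le_pow₀ hp)

theorem pairwise_disjoint_padic_sphere {x : ℚ_[p]} (hx : x ≠ 0) :
    Pairwise (Function.onFun Disjoint fun n : ℕ =>
      sphere (0 : ℚ_[p]) ‖(p : ℚ_[p])⁻¹ ^ n * x‖) := by
  have hp : (1 : ℝ) < p := mod_cast (Fact.out : p.Prime).one_lt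
  intro m n hmn
  refine Set.disjoint_left.2 fun y hm hn => hmn ?_
  have hpow : (p : ℝ) ^ m = p ^ n := by
    simpa [hx] using (mem_sphere_zero_iff_norm.1 hm).symm.trans (mem_sphere_zero_iff_norm.1 hn)
  exact pow_right_injective₀ (zero_lt_one.trans hp) hp.ne' hpow

theorem closedBall_zero_one_eq_iUnion_ball :
    closedBall (0 : ℚ_[p]) 1 = ⋃ i : Fin p, ball ((i : ℕ) : ℚ_[p]) 1 := by
  ext x
  simp only [Set.mem_iUnion, mem_ball_iff_norm, mem_closedBall_zero_iff]
  refine ⟨fun hx => ?_, fun ⟨i, hi⟩ => ?_⟩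
  · let z : ℤ_[p] := ⟨x, hx⟩
    exact ⟨⟨z.zmodRepr, z.zmodRepr_lt_p⟩, z.norm_sub_zmodRepr_lt_one⟩
  · simpa using (Padic.nonarchimedean (x - ((i : ℕ) : ℚ_[p])) (i : ℕ)).trans
      (max_le hi.le (IsUltrametricDist.norm_natCast_le_one ℚ_[p] i))

theorem pairwise_disjoint_ball_natCast :
    Pairwise (Function.onFun Disjoint fun i : Fin p => ball ((i : ℕ) : ℚ_[p]) 1) := by
  intro i j hij
  refine (IsUltrametricDist.ball_eq_or_disjoint _ _ _).resolve_left fun h => hij ?_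
  have hdist : ‖(((i : ℕ) - (j : ℕ) : ℤ) : ℚ_[p])‖ < 1 := by
    simp [← mem_ball_iff_norm, ← h]
  have := Int.eq_zero_of_abs_lt_dvd (Padic.norm_intCast_lt_one_iff.1 hdist)
    (abs_lt.2 (by omega))
  omega

end Norm

section Haar

variable {p : ℕ} [Fact p.Prime] [MeasurableSpace ℚ_[p]] [BorelSpace ℚ_[p]]
  (μ : Measure ℚ_[p]) [μ.IsAddHaarMeasure]

theorem measure_padic_ball_zero_one :
    μ (ball 0 1) = (p : ℝ≥0∞)⁻¹ * μ (closedBall (0 : ℚ_[p]) 1) := by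
  have hp : (p : ℝ≥0∞) ≠ 0 := mod_cast (Fact.out : p.Prime).ne_zero
  rw [closedBall_zero_one_eq_iUnion_ball, measure_iUnion pairwise_disjoint_ball_natCast
    fun _ => measurableSet_ball]
  simp [Measure.addHaar_ball_center, ENNReal.inv_mul_cancel_left hp]

theorem distribHaarChar_mul_measure_closedBall (u : ℚ_[p]ˣ) :
    distribHaarChar ℚ_[p] u * μ (closedBall 0 1) = μ (closedBall 0 ‖(u : ℚ_[p])‖) := by
  rw [distribHaarChar_mul, Units.smul_def, smul_closedBall' u.ne_zero]
  simp

end Haar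

section HaarCharacter

variable {p : ℕ} [Fact p.Prime]

theorem distribHaarChar_padic_p {u : ℚ_[p]ˣ} (hu : (u : ℚ_[p]) = p) :
    distribHaarChar ℚ_[p] u = (p : ℝ≥0)⁻¹ := by
  borelize ℚ_[p]
  have hp : (p : ℝ≥0) ≠ 0 := mod_cast (Fact.out : p.Prime).ne_zero
  refine distribHaarChar_eq_of_measure_smul_eq_mul (μ := Measure.addHaar)
    (measure_closedBall_pos _ 0 one_pos).ne' (isCompact_closedBall 0 1).measure_ne_top ?_
  have hball : ball (0 : ℚ_[p]) 1 = closedBall 0 ‖(p : ℚ_[p])‖ := by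
    ext x
    simpa using padic_norm_lt_norm_iff_mul (y := x) one_ne_zero
  rw [← distribHaarChar_mul, distribHaarChar_mul_measure_closedBall, hu, ← hball,
    measure_padic_ball_zero_one, ENNReal.coe_inv hp, ENNReal.coe_natCast]

theorem distribHaarChar_padic (u : ℚ_[p]ˣ) : distribHaarChar ℚ_[p] u = ‖(u : ℚ_[p])‖₊ := by
  borelize ℚ_[p]
  let μ : Measure ℚ_[p] := Measure.addHaar
  let P : ℚ_[p]ˣ := Units.mk0 p (mod_cast (Fact.out : p.Prime).ne_zero)
  have hnorm : ‖(u : ℚ_[p])‖ = ‖((P ^ (u : ℚ_[p]).valuation : ℚ_[p]ˣ) : ℚ_[p])‖ := by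
    simp [P, Padic.norm_eq_zpow_neg_valuation u.ne_zero]
  rw [distribHaarChar_eq_of_measure_smul_eq_mul (μ := μ)
    (r := distribHaarChar ℚ_[p] (P ^ (u : ℚ_[p]).valuation))
    (measure_closedBall_pos _ 0 one_pos).ne' (isCompact_closedBall 0 1).measure_ne_top]
  · rw [map_zpow, distribHaarChar_padic_p rfl]
    ext
    simp [Padic.norm_eq_zpow_neg_valuation u.ne_zero]
  · rw [← distribHaarChar_mul, distribHaarChar_mul_measure_closedBall,
      distribHaarChar_mul_measure_closedBall, hnorm]

end HaarCharacter

section NormalizedHaar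

variable {p : ℕ} [Fact p.Prime] [MeasurableSpace ℚ_[p]] [BorelSpace ℚ_[p]]
  {μ : Measure ℚ_[p]} [μ.IsAddHaarMeasure] (hμ : μ (closedBall 0 1) = 1)
include hμ

theorem measure_padic_closedBall (a x : ℚ_[p]) : μ (closedBall a ‖x‖) = ‖x‖ₑ := by
  rw [Measure.addHaar_closedBall_center]
  obtain rfl | hx := eq_or_ne x 0
  · simp
  · rw [← Units.val_mk0 hx, ← distribHaarChar_mul_measure_closedBall, distribHaarChar_padic, hμ,
      mul_one, enorm_eq_nnnorm]

theorem measure_padic_ball (a x : ℚ_[p]) : μ (ball a ‖x‖) = (p : ℝ≥0∞)⁻¹ * ‖x‖ₑ := by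
  rw [Measure.addHaar_ball_center]
  obtain rfl | hx := eq_or_ne x 0
  · simp
  have hball : ball (0 : ℚ_[p]) ‖x‖ = closedBall 0 ‖p * x‖ := by
    ext y
    simpa using padic_norm_lt_norm_iff_mul hx
  rw [hball, measure_padic_closedBall hμ, enorm_mul, enorm_padic_p]

theorem measure_padic_sphere (x : ℚ_[p]) :
    μ (sphere 0 ‖x‖) = (1 - (p : ℝ≥0∞)⁻¹) * ‖x‖ₑ := by
  rw [← closedBall_sdiff_ball, measure_sdiff ball_subset_closedBall
    measurableSet_ball.nullMeasurableSet measure_ball_lt_top.ne, measure_padic_closedBall hμ,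
    measure_padic_ball hμ, ENNReal.sub_mul (by simp), one_mul]

theorem measure_padic_sphere_add_inv : μ (sphere (0 : ℚ_[p]) 1) + (p : ℝ≥0∞)⁻¹ = 1 := by
  have := measure_padic_sphere hμ (1 : ℚ_[p])
  simp only [norm_one, enorm_one, mul_one] at this
  rw [this]
  refine tsub_add_cancel_of_le ?_
  rw [ENNReal.inv_le_one]
  exact_mod_cast (Fact.out : p.Prime).one_le

theorem setLIntegral_enorm_sq_inv_sphere {x : ℚ_[p]} (hx : x ≠ 0) :
    ∫⁻ y in sphere 0 ‖x‖, (‖y‖ₑ ^ 2)⁻¹ ∂μ = (1 - (p : ℝ≥0∞)⁻¹) * ‖x‖ₑ⁻¹ := by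
  have hconst : Set.EqOn (fun y : ℚ_[p] => (‖y‖ₑ ^ 2)⁻¹) (fun _ => (‖x‖ₑ ^ 2)⁻¹)
      (sphere 0 ‖x‖) := fun y hy => by
    simp only [enorm_eq_iff_norm_eq.2 (mem_sphere_zero_iff_norm.1 hy)]
  rw [setLIntegral_congr_fun isClosed_sphere.measurableSet hconst, setLIntegral_const,
    measure_padic_sphere hμ, mul_left_comm, ENNReal.inv_pow, sq, mul_assoc,
    ENNReal.inv_mul_cancel (enorm_ne_zero.2 hx) enorm_ne_top, mul_one]

theorem setLIntegral_enorm_sq_inv_norm_le {x : ℚ_[p]} (hx : x ≠ 0) :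
    ∫⁻ y in {y | ‖x‖ ≤ ‖y‖}, (‖y‖ₑ ^ 2)⁻¹ ∂μ = ‖x‖ₑ⁻¹ := by
  set q : ℝ≥0∞ := (p : ℝ≥0∞)⁻¹
  have hp : (p : ℚ_[p]) ≠ 0 := mod_cast (Fact.out : p.Prime).ne_zero
  have hq : q < 1 := ENNReal.inv_lt_one.2 (mod_cast (Fact.out : p.Prime).one_lt)
  have hsphere (n : ℕ) : ∫⁻ y in sphere 0 ‖(p : ℚ_[p])⁻¹ ^ n * x‖, (‖y‖ₑ ^ 2)⁻¹ ∂μ =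
      (1 - q) * ‖x‖ₑ⁻¹ * q ^ n := by
    rw [setLIntegral_enorm_sq_inv_sphere hμ (by positivity), enorm_mul, enorm_pow,
      enorm_inv hp, enorm_padic_p, inv_inv, ENNReal.mul_inv (by simp) (by simp),
      ← ENNReal.inv_pow, mul_assoc, mul_comm ‖x‖ₑ⁻¹]
  calc ∫⁻ y in {y | ‖x‖ ≤ ‖y‖}, (‖y‖ₑ ^ 2)⁻¹ ∂μ
      = ∑' n : ℕ, (1 - q) * ‖x‖ₑ⁻¹ * q ^ n := by
        rw [setOf_le_padic_norm_eq_iUnion_sphere hx, lintegral_iUnion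
          (fun _ => isClosed_sphere.measurableSet) (pairwise_disjoint_padic_sphere hx)]
        simp_rw [hsphere]
    _ = ‖x‖ₑ⁻¹ := by
        rw [ENNReal.tsum_mul_left, ENNReal.tsum_geometric, mul_right_comm,
          ENNReal.mul_inv_cancel (tsub_pos_of_lt hq).ne' (by simp), one_mul]

theorem setLIntegral_enorm_sq_inv_norm_lt {x : ℚ_[p]} (hx : x ≠ 0) :
    ∫⁻ y in {y | ‖x‖ < ‖y‖}, (‖y‖ₑ ^ 2)⁻¹ ∂μ = (p : ℝ≥0∞)⁻¹ * ‖x‖ₑ⁻¹ := by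
  have hp : (p : ℚ_[p]) ≠ 0 := mod_cast (Fact.out : p.Prime).ne_zero
  simp_rw [padic_norm_lt_norm_iff_inv_mul hx]
  rw [setLIntegral_enorm_sq_inv_norm_le hμ (by positivity), enorm_mul, enorm_inv hp,
    enorm_padic_p, inv_inv, ENNReal.mul_inv (by simp) (by simp)]

end NormalizedHaar

section Tonelli

variable {α β : Type*} [MeasurableSpace α] [MeasurableSpace β] {μ : Measure α} {ν : Measure β}
  [SFinite ν]

theorem setLIntegral_prod_mul_of_fiber {S : Set α} {T : α → Set β} {g : α → ℝ≥0∞} {h : β → ℝ≥0∞}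
    (hS : MeasurableSet S) (hT : MeasurableSet {z : α × β | z.1 ∈ S ∧ z.2 ∈ T z.1})
    (hg : Measurable g) (hh : Measurable h) :
    ∫⁻ z in {z : α × β | z.1 ∈ S ∧ z.2 ∈ T z.1}, g z.1 * h z.2 ∂(μ.prod ν) =
      ∫⁻ x in S, g x * ∫⁻ y in T x, h y ∂ν ∂μ := by
  have hgh : Measurable fun z : α × β => g z.1 * h z.2 := by fun_prop
  rw [← lintegral_indicator hT, lintegral_prod _ (hgh.indicator hT).aemeasurable,
    ← lintegral_indicator hS]
  refine lintegral_congr fun x => ?_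
  by_cases hx : x ∈ S
  · have hTx : MeasurableSet (T x) := by
      simpa [Set.preimage, hx] using measurable_prodMk_left (x := x) hT
    rw [Set.indicator_of_mem hx, ← lintegral_const_mul _ hh, ← lintegral_indicator hTx]
    refine lintegral_congr fun y => ?_
    by_cases hy : y ∈ T x <;> simp [hx, hy]
  · simp [Set.indicator, hx]

theorem setLIntegral_prod_mul_of_fiber_swap [SFinite μ]
    {S : Set β} {T : β → Set α} {g : β → ℝ≥0∞} {h : α → ℝ≥0∞}
    (hS : MeasurableSet S) (hT : MeasurableSet {z : α × β | z.2 ∈ S ∧ z.1 ∈ T z.2})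
    (hg : Measurable g) (hh : Measurable h) :
    ∫⁻ z in {z : α × β | z.2 ∈ S ∧ z.1 ∈ T z.2}, g z.2 * h z.1 ∂(μ.prod ν) =
      ∫⁻ y in S, g y * ∫⁻ x in T y, h x ∂μ ∂ν := by
  have hT' : MeasurableSet {z : β × α | z.1 ∈ S ∧ z.2 ∈ T z.1} := measurable_swap hT
  rw [← setLIntegral_prod_mul_of_fiber hS hT' hg hh]
  exact (Measure.measurePreserving_swap (μ := μ) (ν := ν)).setLIntegral_comp_preimage hT'
    (f := fun z => g z.1 * h z.2) (by fun_prop)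

end Tonelli

section Ultrametric

variable {R : Type*} [SeminormedRing R] [NormOneClass R] [IsUltrametricDist R] {x y : R}

theorem norm_sub_one_le_max (x : R) : ‖x - 1‖ ≤ max ‖x‖ 1 := by
  simpa [sub_eq_add_neg] using IsUltrametricDist.norm_add_le_max x (-1)

theorem norm_sub_one_eq_max (hx : ‖x‖ ≠ 1) : ‖x - 1‖ = max ‖x‖ 1 := by
  simpa [sub_eq_add_neg] using
    IsUltrametricDist.norm_add_eq_max_of_norm_ne_norm (x := x) (y := -1) (by simpa)

theorem norm_sub_one_le_one_iff : ‖x - 1‖ ≤ 1 ↔ ‖x‖ ≤ 1 := by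
  refine ⟨fun h => ?_, fun h => (norm_sub_one_le_max x).trans (max_le h le_rfl)⟩
  by_contra! hx
  rw [norm_sub_one_eq_max hx.ne', max_eq_left hx.le] at h
  exact hx.not_ge h

theorem norm_eq_one_of_norm_sub_one_lt_one (h : ‖x - 1‖ < 1) : ‖x‖ = 1 := by
  by_contra hx
  rw [norm_sub_one_eq_max hx] at h
  exact (le_max_right _ _).not_gt h

theorem max_norm_sub_one_eq_max (h : max ‖x‖ ‖y‖ ≠ 1) :
    max ‖y - 1‖ ‖x - 1‖ = max (max ‖x‖ ‖y‖) 1 := by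
  obtain hxy | hxy := le_total ‖x‖ ‖y‖
  · rw [max_eq_right hxy] at h ⊢
    rw [norm_sub_one_eq_max h, max_eq_left]
    exact (norm_sub_one_le_max x).trans (max_le_max_right 1 hxy)
  · rw [max_eq_left hxy] at h ⊢
    rw [norm_sub_one_eq_max h, max_eq_right]
    exact (norm_sub_one_le_max y).trans (max_le_max_right 1 hxy)

end Ultrametric

section Density

variable {K : Type*} [NormedField K]

/-- The density `(|x| max{1,|y|} max{|y-1|,|x-1|})⁻¹` of the local Tamagawa measure in the chart
`(x, y)`. It is valued in `ℝ≥0∞` so that Tonelli's theorem applies without integrability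
conditions; its poles take the value `∞`. -/
noncomputable def tamagawaDensity (z : K × K) : ℝ≥0∞ :=
  (ENNReal.ofReal (‖z.1‖ * max 1 ‖z.2‖ * max ‖z.2 - 1‖ ‖z.1 - 1‖))⁻¹

theorem measurable_tamagawaDensity [MeasurableSpace K] [OpensMeasurableSpace K]
    [MeasurableSub K] : Measurable (tamagawaDensity (K := K)) := by
  unfold tamagawaDensity
  fun_prop

theorem toReal_tamagawaDensity (z : K × K) : (tamagawaDensity z).toReal =
    (‖z.1‖ * max 1 ‖z.2‖ * max ‖z.2 - 1‖ ‖z.1 - 1‖)⁻¹ := by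
  rw [tamagawaDensity, ENNReal.toReal_inv, ENNReal.toReal_ofReal (by positivity)]

variable {x y : K}

theorem tamagawaDensity_of_norm_eq_one (hx : ‖x‖ = 1) (hy : ‖y‖ ≤ 1) :
    tamagawaDensity (x, y) = (max ‖y - 1‖ₑ ‖x - 1‖ₑ)⁻¹ := by
  rw [tamagawaDensity, hx, max_eq_left hy, mul_one, one_mul, ENNReal.ofReal_max, ofReal_norm,
    ofReal_norm]

variable [IsUltrametricDist K]

theorem tamagawaDensity_of_max_norm_ne_one (h : max ‖x‖ ‖y‖ ≠ 1) : tamagawaDensity (x, y) =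
    (ENNReal.ofReal (‖x‖ * max 1 ‖y‖ * max (max ‖x‖ ‖y‖) 1))⁻¹ := by
  rw [tamagawaDensity, max_norm_sub_one_eq_max h]

theorem tamagawaDensity_of_norm_lt (hx : 1 ≤ ‖x‖) (hxy : ‖x‖ < ‖y‖) :
    tamagawaDensity (x, y) = ‖x‖ₑ⁻¹ * (‖y‖ₑ ^ 2)⁻¹ := by
  have hy : 1 < ‖y‖ := hx.trans_lt hxy
  have hmax : max ‖x‖ ‖y‖ = ‖y‖ := max_eq_right hxy.le
  rw [tamagawaDensity_of_max_norm_ne_one (hmax.trans_ne hy.ne'), hmax, max_eq_right hy.le,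
    max_eq_left hy.le, mul_assoc, ← sq, ENNReal.ofReal_mul (norm_nonneg x),
    ENNReal.ofReal_pow (norm_nonneg y), ofReal_norm, ofReal_norm,
    ENNReal.mul_inv (by simp) (by simp)]

theorem tamagawaDensity_of_one_lt_norm (hx : 1 < ‖x‖) (hy : ‖y‖ ≤ 1) :
    tamagawaDensity (x, y) = (‖x‖ₑ ^ 2)⁻¹ := by
  have hmax : max ‖x‖ ‖y‖ = ‖x‖ := max_eq_left (hy.trans hx.le)
  rw [tamagawaDensity_of_max_norm_ne_one (hmax.trans_ne hx.ne'), hmax, max_eq_left hy,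
    max_eq_left hx.le, mul_one, ← sq, ENNReal.ofReal_pow (norm_nonneg x), ofReal_norm]

theorem tamagawaDensity_of_norm_le (hy : 1 < ‖y‖) (hyx : ‖y‖ ≤ ‖x‖) :
    tamagawaDensity (x, y) = ‖y‖ₑ⁻¹ * (‖x‖ₑ ^ 2)⁻¹ := by
  have hx : 1 < ‖x‖ := hy.trans_le hyx
  have hmax : max ‖x‖ ‖y‖ = ‖x‖ := max_eq_left hyx
  rw [tamagawaDensity_of_max_norm_ne_one (hmax.trans_ne hx.ne'), hmax, max_eq_right hy.le,
    max_eq_left hx.le, mul_comm ‖x‖, mul_assoc, ← sq, ENNReal.ofReal_mul (norm_nonneg y),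
    ENNReal.ofReal_pow (norm_nonneg x), ofReal_norm, ofReal_norm,
    ENNReal.mul_inv (by simp) (by simp)]

theorem tamagawaDensity_of_norm_lt_one (hx : ‖x‖ < 1) (hyx : ‖y‖ ≤ ‖x‖) :
    tamagawaDensity (x, y) = ‖x‖ₑ⁻¹ := by
  have hmax : max ‖x‖ ‖y‖ = ‖x‖ := max_eq_left hyx
  rw [tamagawaDensity_of_max_norm_ne_one (hmax.trans_ne hx.ne), hmax, max_eq_left (hyx.trans hx.le),
    max_eq_right hx.le, mul_one, mul_one, ofReal_norm]

end Density

section Regions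

theorem setLIntegral_enorm_sub_inv_mul_enorm_sub {E : Type*} [NormedAddCommGroup E]
    [MeasurableSpace E] {μ : Measure E} [NullSingletonClass μ] (S : Set E) (a : E) :
    ∫⁻ x in S, ‖x - a‖ₑ⁻¹ * ‖x - a‖ₑ ∂μ = μ S := by
  rw [← setLIntegral_one]
  refine lintegral_congr_ae ?_
  filter_upwards [ae_restrict_of_ae (compl_mem_ae_iff.2 (measure_singleton a))] with x hx
  exact ENNReal.inv_mul_cancel (enorm_ne_zero.2 (sub_ne_zero.2 hx)) enorm_ne_top

variable {p : ℕ} [Fact p.Prime] [MeasurableSpace ℚ_[p]] [BorelSpace ℚ_[p]]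
  {μ : Measure ℚ_[p]} [μ.IsAddHaarMeasure] (hμ : μ (closedBall 0 1) = 1)
include hμ

theorem setLIntegral_tamagawaDensity_norm_lt :
    ∫⁻ z in {z | 1 ≤ ‖z.1‖ ∧ ‖z.1‖ < ‖z.2‖}, tamagawaDensity z ∂μ.prod μ = (p : ℝ≥0∞)⁻¹ := by
  calc ∫⁻ z in {z | 1 ≤ ‖z.1‖ ∧ ‖z.1‖ < ‖z.2‖}, tamagawaDensity z ∂μ.prod μ
      = ∫⁻ z in {z | 1 ≤ ‖z.1‖ ∧ ‖z.1‖ < ‖z.2‖}, ‖z.1‖ₑ⁻¹ * (‖z.2‖ₑ ^ 2)⁻¹ ∂μ.prod μ :=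
        setLIntegral_congr_fun (by measurability) fun z hz =>
          tamagawaDensity_of_norm_lt hz.1 hz.2
    _ = ∫⁻ x in {x | 1 ≤ ‖x‖}, ‖x‖ₑ⁻¹ * ∫⁻ y in {y | ‖x‖ < ‖y‖}, (‖y‖ₑ ^ 2)⁻¹ ∂μ ∂μ :=
        setLIntegral_prod_mul_of_fiber (S := {x | 1 ≤ ‖x‖}) (T := fun x => {y | ‖x‖ < ‖y‖})
          (g := fun x => ‖x‖ₑ⁻¹) (h := fun y => (‖y‖ₑ ^ 2)⁻¹) (by measurability)
          (by measurability) (by fun_prop) (by fun_prop)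
    _ = ∫⁻ x in {x | 1 ≤ ‖x‖}, (p : ℝ≥0∞)⁻¹ * (‖x‖ₑ ^ 2)⁻¹ ∂μ :=
        setLIntegral_congr_fun (by measurability) fun x (hx : 1 ≤ ‖x‖) => by
          have hx0 : x ≠ 0 := norm_pos_iff.1 (one_pos.trans_le hx)
          rw [setLIntegral_enorm_sq_inv_norm_lt hμ hx0, mul_left_comm, sq,
            ENNReal.mul_inv (by simp) (by simp)]
    _ = (p : ℝ≥0∞)⁻¹ := by
        rw [lintegral_const_mul _ (by fun_prop), ← norm_one (α := ℚ_[p]),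
          setLIntegral_enorm_sq_inv_norm_le hμ one_ne_zero]
        simp

theorem setLIntegral_tamagawaDensity_one_lt_norm :
    ∫⁻ z in {z | 1 < ‖z.1‖ ∧ ‖z.2‖ ≤ 1}, tamagawaDensity z ∂μ.prod μ = (p : ℝ≥0∞)⁻¹ := by
  calc ∫⁻ z in {z | 1 < ‖z.1‖ ∧ ‖z.2‖ ≤ 1}, tamagawaDensity z ∂μ.prod μ
      = ∫⁻ z in {z | 1 < ‖z.1‖ ∧ ‖z.2‖ ≤ 1}, (‖z.1‖ₑ ^ 2)⁻¹ * 1 ∂μ.prod μ :=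
        setLIntegral_congr_fun (by measurability) fun z hz => by
          rw [mul_one, ← tamagawaDensity_of_one_lt_norm hz.1 hz.2]
    _ = ∫⁻ x in {x | 1 < ‖x‖}, (‖x‖ₑ ^ 2)⁻¹ * ∫⁻ _ in {y | ‖y‖ ≤ 1}, 1 ∂μ ∂μ :=
        setLIntegral_prod_mul_of_fiber (S := {x | 1 < ‖x‖}) (T := fun _ => {y | ‖y‖ ≤ 1})
          (g := fun x => (‖x‖ₑ ^ 2)⁻¹) (h := fun _ => 1) (by measurability)
          (by measurability) (by fun_prop) (by fun_prop)
    _ = ∫⁻ x in {x | 1 < ‖x‖}, (‖x‖ₑ ^ 2)⁻¹ ∂μ := by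
        have hball : {y : ℚ_[p] | ‖y‖ ≤ 1} = closedBall 0 1 := by ext; simp
        simp_rw [setLIntegral_one, hball, hμ, mul_one]
    _ = (p : ℝ≥0∞)⁻¹ := by
        simpa using setLIntegral_enorm_sq_inv_norm_lt hμ one_ne_zero

theorem setLIntegral_tamagawaDensity_norm_le :
    ∫⁻ z in {z | 1 < ‖z.2‖ ∧ ‖z.2‖ ≤ ‖z.1‖}, tamagawaDensity z ∂μ.prod μ = (p : ℝ≥0∞)⁻¹ := by
  calc ∫⁻ z in {z | 1 < ‖z.2‖ ∧ ‖z.2‖ ≤ ‖z.1‖}, tamagawaDensity z ∂μ.prod μ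
      = ∫⁻ z in {z | 1 < ‖z.2‖ ∧ ‖z.2‖ ≤ ‖z.1‖}, ‖z.2‖ₑ⁻¹ * (‖z.1‖ₑ ^ 2)⁻¹ ∂μ.prod μ :=
        setLIntegral_congr_fun (by measurability) fun z hz =>
          tamagawaDensity_of_norm_le hz.1 hz.2
    _ = ∫⁻ y in {y | 1 < ‖y‖}, ‖y‖ₑ⁻¹ * ∫⁻ x in {x | ‖y‖ ≤ ‖x‖}, (‖x‖ₑ ^ 2)⁻¹ ∂μ ∂μ :=
        setLIntegral_prod_mul_of_fiber_swap (S := {y | 1 < ‖y‖})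
          (T := fun y => {x | ‖y‖ ≤ ‖x‖}) (g := fun y => ‖y‖ₑ⁻¹) (h := fun x => (‖x‖ₑ ^ 2)⁻¹)
          (by measurability) (by measurability) (by fun_prop) (by fun_prop)
    _ = ∫⁻ y in {y | 1 < ‖y‖}, (‖y‖ₑ ^ 2)⁻¹ ∂μ :=
        setLIntegral_congr_fun (by measurability) fun y (hy : 1 < ‖y‖) => by
          have hy0 : y ≠ 0 := norm_pos_iff.1 (one_pos.trans hy)
          rw [setLIntegral_enorm_sq_inv_norm_le hμ hy0, sq, ENNReal.mul_inv (by simp) (by simp)]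
    _ = (p : ℝ≥0∞)⁻¹ := by
        simpa using setLIntegral_enorm_sq_inv_norm_lt hμ one_ne_zero

theorem setLIntegral_tamagawaDensity_norm_lt_one :
    ∫⁻ z in {z | ‖z.2‖ ≤ ‖z.1‖ ∧ ‖z.1‖ < 1 ∧ z.1 ≠ 0}, tamagawaDensity z ∂μ.prod μ =
      (p : ℝ≥0∞)⁻¹ := by
  calc ∫⁻ z in {z | ‖z.2‖ ≤ ‖z.1‖ ∧ ‖z.1‖ < 1 ∧ z.1 ≠ 0}, tamagawaDensity z ∂μ.prod μ
      = ∫⁻ z in {z | ‖z.2‖ ≤ ‖z.1‖ ∧ ‖z.1‖ < 1 ∧ z.1 ≠ 0}, ‖z.1‖ₑ⁻¹ * 1 ∂μ.prod μ :=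
        setLIntegral_congr_fun (by measurability) fun z hz => by
          rw [mul_one, ← tamagawaDensity_of_norm_lt_one hz.2.1 hz.1]
    _ = ∫⁻ z in {z | (‖z.1‖ < 1 ∧ z.1 ≠ 0) ∧ ‖z.2‖ ≤ ‖z.1‖}, ‖z.1‖ₑ⁻¹ * 1 ∂μ.prod μ := by
        simp_rw [and_comm]
    _ = ∫⁻ x in {x | ‖x‖ < 1 ∧ x ≠ 0}, ‖x‖ₑ⁻¹ * ∫⁻ _ in {y | ‖y‖ ≤ ‖x‖}, 1 ∂μ ∂μ :=
        setLIntegral_prod_mul_of_fiber (S := {x | ‖x‖ < 1 ∧ x ≠ 0})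
          (T := fun x => {y | ‖y‖ ≤ ‖x‖}) (g := fun x => ‖x‖ₑ⁻¹) (h := fun _ => 1)
          (by measurability) (by measurability) (by fun_prop) (by fun_prop)
    _ = ∫⁻ x in {x | ‖x‖ < 1 ∧ x ≠ 0}, ‖x - 0‖ₑ⁻¹ * ‖x - 0‖ₑ ∂μ := by
        have hball (x : ℚ_[p]) : {y : ℚ_[p] | ‖y‖ ≤ ‖x‖} = closedBall 0 ‖x‖ := by ext; simp
        simp_rw [setLIntegral_one, hball, measure_padic_closedBall hμ, sub_zero]
    _ = (p : ℝ≥0∞)⁻¹ := by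
        have hball : {x : ℚ_[p] | ‖x‖ < 1 ∧ x ≠ 0} = ball 0 1 \ {0} := by ext; simp
        rw [setLIntegral_enorm_sub_inv_mul_enorm_sub, hball,
          measure_sdiff_null (measure_singleton 0), measure_padic_ball_zero_one, hμ, mul_one]

theorem setLIntegral_tamagawaDensity_norm_sub_one_le :
    ∫⁻ z in {z | ‖z.1‖ = 1 ∧ ‖z.2 - 1‖ ≤ ‖z.1 - 1‖}, tamagawaDensity z ∂μ.prod μ =
      μ (sphere 0 1) := by
  calc ∫⁻ z in {z | ‖z.1‖ = 1 ∧ ‖z.2 - 1‖ ≤ ‖z.1 - 1‖}, tamagawaDensity z ∂μ.prod μ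
      = ∫⁻ z in {z | ‖z.1‖ = 1 ∧ ‖z.2 - 1‖ ≤ ‖z.1 - 1‖}, ‖z.1 - 1‖ₑ⁻¹ * 1 ∂μ.prod μ :=
        setLIntegral_congr_fun (by measurability) fun z hz => by
          have hy : ‖z.2‖ ≤ 1 :=
            norm_sub_one_le_one_iff.1 (hz.2.trans (norm_sub_one_le_one_iff.2 hz.1.le))
          rw [mul_one, ← max_eq_right (enorm_le_iff_norm_le.2 hz.2),
            ← tamagawaDensity_of_norm_eq_one hz.1 hy]
    _ = ∫⁻ x in {x | ‖x‖ = 1}, ‖x - 1‖ₑ⁻¹ * ∫⁻ _ in {y | ‖y - 1‖ ≤ ‖x - 1‖}, 1 ∂μ ∂μ :=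
        setLIntegral_prod_mul_of_fiber (S := {x | ‖x‖ = 1})
          (T := fun x => {y | ‖y - 1‖ ≤ ‖x - 1‖}) (g := fun x => ‖x - 1‖ₑ⁻¹) (h := fun _ => 1)
          (by measurability) (by measurability) (by fun_prop) (by fun_prop)
    _ = ∫⁻ x in {x | ‖x‖ = 1}, ‖x - 1‖ₑ⁻¹ * ‖x - 1‖ₑ ∂μ := by
        have hball (x : ℚ_[p]) : {y : ℚ_[p] | ‖y - 1‖ ≤ ‖x - 1‖} = closedBall 1 ‖x - 1‖ := by
          ext; simp [dist_eq_norm]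
        simp_rw [setLIntegral_one, hball, measure_padic_closedBall hμ]
    _ = μ (sphere 0 1) := by
        have hsphere : {x : ℚ_[p] | ‖x‖ = 1} = sphere 0 1 := by ext; simp
        rw [setLIntegral_enorm_sub_inv_mul_enorm_sub, hsphere]

theorem setLIntegral_tamagawaDensity_norm_sub_one_lt :
    ∫⁻ z in {z | ‖z.2‖ ≤ 1 ∧ ‖z.1 - 1‖ < ‖z.2 - 1‖}, tamagawaDensity z ∂μ.prod μ =
      (p : ℝ≥0∞)⁻¹ := by
  calc ∫⁻ z in {z | ‖z.2‖ ≤ 1 ∧ ‖z.1 - 1‖ < ‖z.2 - 1‖}, tamagawaDensity z ∂μ.prod μ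
      = ∫⁻ z in {z | ‖z.2‖ ≤ 1 ∧ ‖z.1 - 1‖ < ‖z.2 - 1‖}, ‖z.2 - 1‖ₑ⁻¹ * 1 ∂μ.prod μ :=
        setLIntegral_congr_fun (by measurability) fun z hz => by
          have hx : ‖z.1‖ = 1 := norm_eq_one_of_norm_sub_one_lt_one
            (hz.2.trans_le (norm_sub_one_le_one_iff.2 hz.1))
          rw [mul_one, ← max_eq_left (enorm_le_iff_norm_le.2 hz.2.le),
            ← tamagawaDensity_of_norm_eq_one hx hz.1]
    _ = ∫⁻ y in {y | ‖y‖ ≤ 1}, ‖y - 1‖ₑ⁻¹ * ∫⁻ _ in {x | ‖x - 1‖ < ‖y - 1‖}, 1 ∂μ ∂μ :=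
        setLIntegral_prod_mul_of_fiber_swap (S := {y | ‖y‖ ≤ 1})
          (T := fun y => {x | ‖x - 1‖ < ‖y - 1‖}) (g := fun y => ‖y - 1‖ₑ⁻¹) (h := fun _ => 1)
          (by measurability) (by measurability) (by fun_prop) (by fun_prop)
    _ = ∫⁻ y in {y | ‖y‖ ≤ 1}, (p : ℝ≥0∞)⁻¹ * (‖y - 1‖ₑ⁻¹ * ‖y - 1‖ₑ) ∂μ := by
        have hball (y : ℚ_[p]) : {x : ℚ_[p] | ‖x - 1‖ < ‖y - 1‖} = ball 1 ‖y - 1‖ := by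
          ext; simp [dist_eq_norm]
        simp_rw [setLIntegral_one, hball, measure_padic_ball hμ, mul_left_comm]
    _ = (p : ℝ≥0∞)⁻¹ := by
        have hball : {y : ℚ_[p] | ‖y‖ ≤ 1} = closedBall 0 1 := by ext; simp
        rw [lintegral_const_mul _ (by fun_prop), setLIntegral_enorm_sub_inv_mul_enorm_sub, hball,
          hμ, mul_one]

theorem setLIntegral_tamagawaDensity_norm_eq_one :
    ∫⁻ z in {z | ‖z.1‖ = 1 ∧ ‖z.2‖ ≤ 1}, tamagawaDensity z ∂μ.prod μ = 1 := by
  have hunion : {z : ℚ_[p] × ℚ_[p] | ‖z.1‖ = 1 ∧ ‖z.2‖ ≤ 1} =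
      {z | ‖z.1‖ = 1 ∧ ‖z.2 - 1‖ ≤ ‖z.1 - 1‖} ∪ {z | ‖z.2‖ ≤ 1 ∧ ‖z.1 - 1‖ < ‖z.2 - 1‖} := by
    ext ⟨x, y⟩
    refine ⟨fun h => (le_or_gt ‖y - 1‖ ‖x - 1‖).imp (⟨h.1, ·⟩) (⟨h.2, ·⟩), ?_⟩
    rintro (⟨hx, hyx⟩ | ⟨hy, hxy⟩)
    · exact ⟨hx, norm_sub_one_le_one_iff.1 (hyx.trans (norm_sub_one_le_one_iff.2 hx.le))⟩
    · exact ⟨norm_eq_one_of_norm_sub_one_lt_one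
        (hxy.trans_le (norm_sub_one_le_one_iff.2 hy)), hy⟩
  have hdisj : Disjoint {z : ℚ_[p] × ℚ_[p] | ‖z.1‖ = 1 ∧ ‖z.2 - 1‖ ≤ ‖z.1 - 1‖}
      {z | ‖z.2‖ ≤ 1 ∧ ‖z.1 - 1‖ < ‖z.2 - 1‖} :=
    Set.disjoint_left.2 fun _ h₁ h₂ => h₁.2.not_gt h₂.2
  rw [hunion, lintegral_union (by measurability) hdisj,
    setLIntegral_tamagawaDensity_norm_sub_one_le hμ,
    setLIntegral_tamagawaDensity_norm_sub_one_lt hμ, measure_padic_sphere_add_inv hμ]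

theorem setLIntegral_tamagawaDensity_one_le_norm :
    ∫⁻ z in {z | 1 ≤ ‖z.1‖}, tamagawaDensity z ∂μ.prod μ = 1 + 3 * (p : ℝ≥0∞)⁻¹ := by
  have hunion : {z : ℚ_[p] × ℚ_[p] | 1 ≤ ‖z.1‖} =
      {z | ‖z.1‖ = 1 ∧ ‖z.2‖ ≤ 1} ∪ {z | 1 < ‖z.1‖ ∧ ‖z.2‖ ≤ 1} ∪
        {z | 1 < ‖z.2‖ ∧ ‖z.2‖ ≤ ‖z.1‖} ∪ {z | 1 ≤ ‖z.1‖ ∧ ‖z.1‖ < ‖z.2‖} := by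
    ext z
    simp only [Set.mem_union, Set.mem_ofPred_eq]
    grind
  rw [hunion, lintegral_union (by measurability) (by rw [Set.disjoint_left]; grind),
    lintegral_union (by measurability) (by rw [Set.disjoint_left]; grind),
    lintegral_union (by measurability) (by rw [Set.disjoint_left]; grind),
    setLIntegral_tamagawaDensity_norm_eq_one hμ, setLIntegral_tamagawaDensity_one_lt_norm hμ,
    setLIntegral_tamagawaDensity_norm_le hμ, setLIntegral_tamagawaDensity_norm_lt hμ]
  ring

theorem setLIntegral_tamagawaDensity_union :
    ∫⁻ z in {z | 1 ≤ ‖z.1‖} ∪ {z | ‖z.2‖ ≤ ‖z.1‖ ∧ ‖z.1‖ < 1 ∧ z.1 ≠ 0},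
      tamagawaDensity z ∂μ.prod μ = 1 + 4 * (p : ℝ≥0∞)⁻¹ := by
  have hdisj : Disjoint {z : ℚ_[p] × ℚ_[p] | 1 ≤ ‖z.1‖}
      {z | ‖z.2‖ ≤ ‖z.1‖ ∧ ‖z.1‖ < 1 ∧ z.1 ≠ 0} :=
    Set.disjoint_left.2 fun _ h₁ h₂ => h₂.2.1.not_ge h₁
  rw [lintegral_union (by measurability) hdisj, setLIntegral_tamagawaDensity_one_le_norm hμ,
    setLIntegral_tamagawaDensity_norm_lt_one hμ]
  ring

end Regions

/-- The expected `p`-adic density: the integral of the local Tamagawa density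
`(|x|_p max{1,|y|_p} max{|y-1|_p,|x-1|_p})⁻¹` over the region of integral points equals
`1 + 4/p`, where the Haar measure on `ℚ_p` is normalized by `μ(ℤ_p) = 1`. -/
theorem padic_density_integral
    (p : ℕ) [Fact p.Prime]
    [MeasurableSpace ℚ_[p]] [BorelSpace ℚ_[p]]
    (μ : Measure ℚ_[p]) [μ.IsAddHaarMeasure]
    (hμ : μ {x : ℚ_[p] | ‖x‖ ≤ 1} = 1) :
    IntegrableOn
      (fun z : ℚ_[p] × ℚ_[p] =>
        (‖z.1‖ * max 1 ‖z.2‖ * max ‖z.2 - 1‖ ‖z.1 - 1‖)⁻¹)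
      ({z : ℚ_[p] × ℚ_[p] | 1 ≤ ‖z.1‖} ∪
        {z : ℚ_[p] × ℚ_[p] | ‖z.2‖ ≤ ‖z.1‖ ∧ ‖z.1‖ < 1 ∧ z.1 ≠ 0})
      (μ.prod μ) ∧
    ∫ z in ({z : ℚ_[p] × ℚ_[p] | 1 ≤ ‖z.1‖} ∪
        {z : ℚ_[p] × ℚ_[p] | ‖z.2‖ ≤ ‖z.1‖ ∧ ‖z.1‖ < 1 ∧ z.1 ≠ 0}),
        (‖z.1‖ * max 1 ‖z.2‖ * max ‖z.2 - 1‖ ‖z.1 - 1‖)⁻¹ ∂(μ.prod μ) =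
      1 + 4 / (p : ℝ) := by
  have hball : μ (closedBall 0 1) = 1 := by
    rwa [← show {x : ℚ_[p] | ‖x‖ ≤ 1} = closedBall 0 1 by ext; simp]
  have hlintegral := setLIntegral_tamagawaDensity_union hball
  have hp : (p : ℝ≥0∞)⁻¹ ≠ ∞ := by simpa using (Fact.out : p.Prime).ne_zero
  have hfinite : 1 + 4 * (p : ℝ≥0∞)⁻¹ ≠ ∞ := by finiteness
  simp_rw [← toReal_tamagawaDensity]
  refine ⟨integrable_toReal_of_lintegral_ne_top measurable_tamagawaDensity.aemeasurable
    (hlintegral.trans_ne hfinite), ?_⟩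
  rw [integral_toReal measurable_tamagawaDensity.aemeasurable
    (ae_lt_top measurable_tamagawaDensity (hlintegral.trans_ne hfinite)), hlintegral,
    ENNReal.toReal_add ENNReal.one_ne_top (by finiteness)]
  simp [div_eq_mul_inv]
end

section
/- For every natural number $q$, $\frac{1}{q!}\int_{P} \Big(\frac{1}{2}(t_3 + t_4 + 1) - t_1 - t_2\Big)^q \, dt_1\, dt_2\, dt_3\, dt_4 = \frac{2}{3} \cdot \frac{1}{2\, q!}\int_{P_\alpha} \Big(\frac{1}{2}(1 - 2t_1 - 2t_2 + t_3 + t_4)\Big)^q \, dt_1\, dt_2\, dt_3\, dt_4$, i.e., $V_1 = \frac{2}{3}\alpha(X)$, where $P = \{t \in \mathbb{R}^4_{\ge 0} : 2t_1 + t_3 + t_4 \le 1,\ 2t_2 + t_3 + t_4 \le 1,\ 2t_i + 2t_j - t_3 - t_4 \le 1 \text{ for all distinct } i,j\}$ and $P_\alpha = \{t \in \mathbb{R}^4_{\ge 0} : 2t_i + 2t_j - t_3 - t_4 \le 1 \text{ for all distinct } i,j \in \{1,2,3,4\}\}$. -/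
open MeasureTheory

/-! In the coordinates `x = (t₁, t₂, (1 - t₃ - t₄) / 2, t₃ - t₄)`, which preserve Lebesgue measure,
`P_α` becomes the polytope `0 ≤ xᵢ`, `2 xᵢ + |x₄| ≤ 1` (`i ≤ 3`), `x₁ + x₂ + x₃ ≤ 1`, and the
base of the integrand becomes `1 - (x₁ + x₂ + x₃)`. Both are symmetric in `x₁, x₂, x₃`, while the
two extra inequalities cutting out `P` say that `x₃` is the largest of the three. Hence the
integral over `P` is one third of the integral over `P_α`. -/

section Swap

variable {ι : Type*} [DecidableEq ι] {s : Finset ι} {i j k : ι}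

theorem swap_apply_mem_iff (hi : i ∈ s) (hj : j ∈ s) : Equiv.swap i j k ∈ s ↔ k ∈ s := by
  grind

theorem forall_mem_swap_apply_iff {p : ι → Prop} (hi : i ∈ s) (hj : j ∈ s) :
    (∀ k ∈ s, p (Equiv.swap i j k)) ↔ ∀ k ∈ s, p k :=
  (Equiv.swap i j).forall_congr fun _ ↦ by rw [swap_apply_mem_iff hi hj]

theorem sum_swap_apply {M : Type*} [AddCommMonoid M] (hi : i ∈ s) (hj : j ∈ s) (x : ι → M) :
    ∑ k ∈ s, x (Equiv.swap i j k) = ∑ k ∈ s, x k :=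
  Finset.sum_equiv (Equiv.swap i j) (fun _ ↦ (swap_apply_mem_iff hi hj).symm) fun _ _ ↦ rfl

theorem isMaxOn_comp_swap_iff {α : Type*} [Preorder α] {x : ι → α} (hi : i ∈ s) (hj : j ∈ s) :
    IsMaxOn (x ∘ Equiv.swap i j) s i ↔ IsMaxOn x s j := by
  simp only [isMaxOn_iff, Function.comp_apply, Equiv.swap_apply_left, Finset.mem_coe]
  exact forall_mem_swap_apply_iff (p := fun k ↦ x k ≤ x j) hi hj

end Swap

section MaxCells

variable {ι : Type*} {s : Finset ι}

theorem iUnion_setOf_isMaxOn_eq_univ {α : Type*} [LinearOrder α] (hs : s.Nonempty) :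
    ⋃ j : s, {x : ι → α | IsMaxOn x s j} = Set.univ := by
  refine Set.eq_univ_of_forall fun x ↦ ?_
  obtain ⟨j, hj, hmax⟩ := s.exists_max_image x hs
  exact Set.mem_iUnion.mpr ⟨⟨j, hj⟩, hmax⟩

theorem measurableSet_setOf_isMaxOn {α : Type*} [LinearOrder α] [TopologicalSpace α]
    [OrderClosedTopology α] [SecondCountableTopology α] [MeasurableSpace α]
    [OpensMeasurableSpace α] (s : Finset ι) (i : ι) :
    MeasurableSet {x : ι → α | IsMaxOn x s i} := by
  simp only [isMaxOn_iff, Set.ofPred_forall]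
  exact .biInter s.countable_toSet fun j _ ↦
    measurableSet_le (measurable_pi_apply j) (measurable_pi_apply i)

variable [Fintype ι] {i j : ι}

theorem ae_volume_apply_ne_apply (hij : i ≠ j) : ∀ᵐ x : ι → ℝ, x i ≠ x j := by
  classical
  let L : (ι → ℝ) →ₗ[ℝ] ℝ := .proj (φ := fun _ ↦ ℝ) i - .proj (φ := fun _ ↦ ℝ) j
  have hL : L.ker ≠ ⊤ := fun h ↦ by
    simpa [L, hij.symm] using LinearMap.congr_fun (LinearMap.ker_eq_top.mp h) (Pi.single i 1)
  have hker : {x : ι → ℝ | ¬ x i ≠ x j} = L.ker := by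
    ext x
    simp [L, sub_eq_zero]
  rw [ae_iff, hker]
  exact Measure.addHaar_submodule volume _ hL

theorem aedisjoint_setOf_isMaxOn (hi : i ∈ s) (hj : j ∈ s) (hij : i ≠ j) :
    AEDisjoint volume {x : ι → ℝ | IsMaxOn x s i} {x | IsMaxOn x s j} := by
  refine measure_mono_null ?_ (ae_iff.mp (ae_volume_apply_ne_apply hij))
  rintro x ⟨hxi, hxj⟩
  exact not_not.mpr (le_antisymm (hxj hi) (hxi hj))

end MaxCells

section SymmetricIntegral

variable {ι E : Type*} [Fintype ι] [NormedAddCommGroup E] [NormedSpace ℝ E]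

theorem integral_eq_card_nsmul_setIntegral {α : Type*} [MeasurableSpace α] {μ : Measure α}
    {C : ι → Set α} {e : ι → α ≃ᵐ α} {f : α → E} {i : ι}
    (hC : ∀ j, NullMeasurableSet (C j) μ) (hdisj : Pairwise (Function.onFun (AEDisjoint μ) C))
    (hcover : ⋃ j, C j = Set.univ) (he : ∀ j, MeasurePreserving (e j) μ μ)
    (hCe : ∀ j, e j ⁻¹' C i = C j) (hfe : ∀ j x, f (e j x) = f x) :
    ∫ x, f x ∂μ = Fintype.card ι • ∫ x in C i, f x ∂μ := by
  have hcell (j : ι) : ∫ x in C j, f x ∂μ = ∫ x in C i, f x ∂μ := by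
    rw [← (he j).setIntegral_preimage_emb (e j).measurableEmbedding f (C i), hCe]
    simp only [hfe]
  have hint (j : ι) : IntegrableOn f (C j) μ ↔ IntegrableOn f (C i) μ := by
    rw [← (he j).integrableOn_comp_preimage (s := C i) (e j).measurableEmbedding, hCe]
    simp only [Function.comp_def, hfe]
  by_cases hfi : IntegrableOn f (C i) μ
  · have hfU : IntegrableOn f (⋃ j, C j) μ :=
      integrableOn_finite_iUnion.mpr fun j ↦ (hint j).mpr hfi
    rw [← setIntegral_univ, ← hcover, integral_iUnion_ae hC hdisj hfU, tsum_fintype]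
    simp only [hcell, Finset.sum_const, Finset.card_univ]
  · have hf : ¬ Integrable f μ := fun h ↦ hfi h.integrableOn
    rw [integral_undef hfi, integral_undef hf, smul_zero]

theorem setIntegral_eq_card_nsmul_setIntegral_isMaxOn [DecidableEq ι] {s : Finset ι} {i : ι}
    {K : Set (ι → ℝ)} {f : (ι → ℝ) → E} (hi : i ∈ s)
    (hK : ∀ j ∈ s, ∀ x, x ∘ Equiv.swap i j ∈ K ↔ x ∈ K)
    (hf : ∀ j ∈ s, ∀ x, f (x ∘ Equiv.swap i j) = f x) :
    ∫ x in K, f x = s.card • ∫ x in K ∩ {x | IsMaxOn x s i}, f x := by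
  let e (j : s) : (ι → ℝ) ≃ᵐ (ι → ℝ) := .arrowCongr' (Equiv.swap i j) (.refl ℝ)
  have he (j : s) : MeasurePreserving (e j) (volume.restrict K) (volume.restrict K) := by
    have h := (volume_preserving_arrowCongr' (Equiv.swap i j) (.refl ℝ)
      (.id volume)).restrict_preimage_emb (e j).measurableEmbedding K
    rwa [show e j ⁻¹' K = K from Set.ext (hK j j.2)] at h
  have hcells := integral_eq_card_nsmul_setIntegral (μ := volume.restrict K)
    (C := fun j : s ↦ {x | IsMaxOn x s j}) (i := ⟨i, hi⟩)
    (fun j ↦ (measurableSet_setOf_isMaxOn s j).nullMeasurableSet)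
    (fun j k hjk ↦ Measure.restrict_le_self.absolutelyContinuous
      (aedisjoint_setOf_isMaxOn j.2 k.2 (Subtype.coe_ne_coe.mpr hjk)))
    (iUnion_setOf_isMaxOn_eq_univ ⟨i, hi⟩) he
    (fun j ↦ Set.ext fun x ↦ isMaxOn_comp_swap_iff hi j.2) (fun j ↦ hf j j.2)
  rwa [Fintype.card_coe, Measure.restrict_restrict (measurableSet_setOf_isMaxOn s i),
    Set.inter_comm] at hcells

end SymmetricIntegral

section SymmetricPolytope

variable {ι : Type*}

/-- The shape that `P_α` takes in coordinates in which its symmetry is visible: the coordinates in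
`s` are interchangeable, and `d` is the remaining one. For `P_α` itself, `s` has three elements. -/
def symmetricPolytope (s : Finset ι) (d : ι) : Set (ι → ℝ) :=
  {x | (∀ i ∈ s, 0 ≤ x i ∧ 2 * x i + |x d| ≤ 1) ∧ ∑ i ∈ s, x i ≤ 1}

variable {s : Finset ι} {d i j : ι}

theorem comp_swap_mem_symmetricPolytope_iff [DecidableEq ι] {x : ι → ℝ} (hi : i ∈ s) (hj : j ∈ s)
    (hd : d ∉ s) :
    x ∘ Equiv.swap i j ∈ symmetricPolytope s d ↔ x ∈ symmetricPolytope s d := by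
  have hdi : d ≠ i := fun h ↦ hd (h ▸ hi)
  have hdj : d ≠ j := fun h ↦ hd (h ▸ hj)
  simp only [symmetricPolytope, Set.mem_ofPred_eq, Function.comp_apply, sum_swap_apply hi hj,
    Equiv.swap_apply_of_ne_of_ne hdi hdj,
    forall_mem_swap_apply_iff (p := fun k ↦ 0 ≤ x k ∧ 2 * x k + |x d| ≤ 1) hi hj]

theorem setIntegral_symmetricPolytope_eq_card_nsmul [Fintype ι] {E : Type*} [NormedAddCommGroup E]
    [NormedSpace ℝ E] (g : ℝ → E) (hi : i ∈ s) (hd : d ∉ s) :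
    ∫ x in symmetricPolytope s d, g (∑ k ∈ s, x k) =
      s.card • ∫ x in symmetricPolytope s d ∩ {x | IsMaxOn x s i}, g (∑ k ∈ s, x k) := by
  classical
  exact setIntegral_eq_card_nsmul_setIntegral_isMaxOn hi
    (fun _ hj _ ↦ comp_swap_mem_symmetricPolytope_iff hi hj hd)
    fun _ hj x ↦ congrArg g (sum_swap_apply hi hj x)

end SymmetricPolytope

section AffineMap

variable {ι : Type*} [Fintype ι] [DecidableEq ι]

open Matrix in
theorem measurePreserving_mulVec_add {M : Matrix ι ι ℝ} (hM : |M.det| = 1) (v : ι → ℝ) :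
    MeasurePreserving (fun t : ι → ℝ ↦ M *ᵥ t + v) := by
  have hdet : M.det ≠ 0 := abs_ne_zero.mp (hM ▸ one_ne_zero)
  have hlin : MeasurePreserving (toLin' M) := by
    refine ⟨(toLin' M).continuous_of_finiteDimensional.measurable, ?_⟩
    rw [Real.map_matrix_volume_pi_eq_smul_volume_pi hdet, abs_inv, hM, inv_one, ENNReal.ofReal_one,
      one_smul]
  exact (measurePreserving_add_right volume v).comp hlin

end AffineMap

/-- The polytope `P_α` of the paper. -/
def polytopePα : Set (Fin 4 → ℝ) :=
  {t | (∀ k, 0 ≤ t k) ∧ ∀ i j : Fin 4, i ≠ j → 2 * t i + 2 * t j - t 2 - t 3 ≤ 1}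

/-- The subpolytope `P` of `P_α`. -/
def polytopeP : Set (Fin 4 → ℝ) :=
  {t | (∀ k, 0 ≤ t k) ∧ 2 * t 0 + t 2 + t 3 ≤ 1 ∧ 2 * t 1 + t 2 + t 3 ≤ 1 ∧
    ∀ i j : Fin 4, i ≠ j → 2 * t i + 2 * t j - t 2 - t 3 ≤ 1}

/-- Coordinates on `ℝ⁴` of which the first three play interchangeable roles in `P_α`. -/
noncomputable def symmetricCoords (t : Fin 4 → ℝ) : Fin 4 → ℝ :=
  ![t 0, t 1, (1 - t 2 - t 3) / 2, t 2 - t 3]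

theorem measurePreserving_symmetricCoords : MeasurePreserving symmetricCoords := by
  convert measurePreserving_mulVec_add
    (M := !![1, 0, 0, 0; 0, 1, 0, 0; 0, 0, -1/2, -1/2; 0, 0, 1, -1]) ?_ ![0, 0, 1/2, 0] using 1
  · ext t k
    fin_cases k <;> simp [symmetricCoords, dotProduct, Fin.sum_univ_four] <;> ring
  · rw [Matrix.det_succ_row_zero]
    simp [Fin.sum_univ_succ, Matrix.det_fin_three, Fin.succAbove, neg_div, ← two_mul]

theorem injective_symmetricCoords : Function.Injective symmetricCoords := by
  intro t u h
  simp only [symmetricCoords, Matrix.vecCons_inj] at h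
  obtain ⟨h0, h1, h2, h3, -⟩ := h
  ext k
  fin_cases k <;> simp only [Fin.reduceFinMk, Fin.zero_eta, Fin.mk_one] <;> linarith

theorem measurableEmbedding_symmetricCoords : MeasurableEmbedding symmetricCoords :=
  measurePreserving_symmetricCoords.measurable.measurableEmbedding injective_symmetricCoords

theorem sum_symmetricCoords (t : Fin 4 → ℝ) :
    ∑ k ∈ {0, 1, 2}, symmetricCoords t k = t 0 + t 1 + (1 - t 2 - t 3) / 2 := by
  simp [symmetricCoords, add_assoc]

theorem mem_polytopePα_iff {t : Fin 4 → ℝ} :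
    t ∈ polytopePα ↔ (0 ≤ t 0 ∧ 0 ≤ t 1 ∧ 0 ≤ t 2 ∧ 0 ≤ t 3) ∧ 2 * t 0 + |t 2 - t 3| ≤ 1 ∧
      2 * t 1 + |t 2 - t 3| ≤ 1 ∧ 2 * t 0 + 2 * t 1 - t 2 - t 3 ≤ 1 ∧ t 2 + t 3 ≤ 1 := by
  simp only [polytopePα, Set.mem_ofPred_eq, ← le_sub_iff_add_le', abs_le]
  constructor
  · rintro ⟨hpos, hpair⟩
    have h01 := hpair 0 1 (by decide)
    have h02 := hpair 0 2 (by decide)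
    have h03 := hpair 0 3 (by decide)
    have h12 := hpair 1 2 (by decide)
    have h13 := hpair 1 3 (by decide)
    have h23 := hpair 2 3 (by decide)
    grind
  · rintro ⟨⟨h0, h1, h2, h3⟩, h⟩
    refine ⟨fun k ↦ by fin_cases k <;> assumption, fun i j hij ↦ ?_⟩
    fin_cases i <;> fin_cases j <;> grind

theorem symmetricCoords_preimage_symmetricPolytope :
    symmetricCoords ⁻¹' symmetricPolytope {0, 1, 2} 3 = polytopePα := by
  ext t
  rw [mem_polytopePα_iff]
  simp only [symmetricPolytope, Set.mem_preimage, Set.mem_ofPred_eq, sum_symmetricCoords,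
    Finset.mem_insert, Finset.mem_singleton, forall_eq_or_imp, forall_eq]
  simp only [symmetricCoords, Matrix.cons_val]
  grind

theorem symmetricCoords_preimage_inter_setOf_isMaxOn :
    symmetricCoords ⁻¹' (symmetricPolytope {0, 1, 2} 3 ∩
      {x | IsMaxOn x ({0, 1, 2} : Finset (Fin 4)) 2}) = polytopeP := by
  rw [Set.preimage_inter, symmetricCoords_preimage_symmetricPolytope]
  ext t
  simp only [polytopePα, polytopeP, Set.mem_inter_iff, Set.mem_preimage, Set.mem_ofPred_eq,
    isMaxOn_iff, Finset.mem_coe, Finset.mem_insert, Finset.mem_singleton, forall_eq_or_imp,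
    forall_eq, symmetricCoords, Matrix.cons_val]
  grind

theorem setIntegral_polytopePα_eq_three_nsmul {E : Type*} [NormedAddCommGroup E]
    [NormedSpace ℝ E] (g : ℝ → E) :
    ∫ t in polytopePα, g (t 0 + t 1 + (1 - t 2 - t 3) / 2) =
      3 • ∫ t in polytopeP, g (t 0 + t 1 + (1 - t 2 - t 3) / 2) := by
  simp only [← symmetricCoords_preimage_symmetricPolytope,
    ← symmetricCoords_preimage_inter_setOf_isMaxOn, ← sum_symmetricCoords,
    measurePreserving_symmetricCoords.setIntegral_preimage_emb
      measurableEmbedding_symmetricCoords (fun x ↦ g (∑ k ∈ {0, 1, 2}, x k))]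
  exact setIntegral_symmetricPolytope_eq_card_nsmul g (by decide) (by decide)

/-- `V₁ = (2/3) α(X)`: the integral of `((t₃+t₄+1)/2 - t₁ - t₂)^q / q!` over the
subpolytope `P` equals `2/3` times the integral of `((1-2t₁-2t₂+t₃+t₄)/2)^q / (2 q!)` over
`P_α`. (Indices are 0-based: `t₁,…,t₄` are `t 0, t 1, t 2, t 3`.) -/
theorem V1_eq_two_thirds_alpha (q : ℕ) :
    (1 / (q.factorial : ℝ)) *
      ∫ t in {t : Fin 4 → ℝ | (∀ k, 0 ≤ t k) ∧
          2 * t 0 + t 2 + t 3 ≤ 1 ∧ 2 * t 1 + t 2 + t 3 ≤ 1 ∧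
          ∀ i j : Fin 4, i ≠ j → 2 * t i + 2 * t j - t 2 - t 3 ≤ 1},
        ((1 / 2) * (t 2 + t 3 + 1) - t 0 - t 1) ^ q =
    (2 / 3) * ((1 / (2 * (q.factorial : ℝ))) *
      ∫ t in {t : Fin 4 → ℝ | (∀ k, 0 ≤ t k) ∧
          ∀ i j : Fin 4, i ≠ j → 2 * t i + 2 * t j - t 2 - t 3 ≤ 1},
        ((1 / 2) * (1 - 2 * t 0 - 2 * t 1 + t 2 + t 3)) ^ q) := by
  have hP (t : Fin 4 → ℝ) : (1 / 2) * (t 2 + t 3 + 1) - t 0 - t 1 =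
      1 - (t 0 + t 1 + (1 - t 2 - t 3) / 2) := by ring
  have hPα (t : Fin 4 → ℝ) : (1 / 2) * (1 - 2 * t 0 - 2 * t 1 + t 2 + t 3) =
      1 - (t 0 + t 1 + (1 - t 2 - t 3) / 2) := by ring
  have hthree := setIntegral_polytopePα_eq_three_nsmul fun r ↦ (1 - r) ^ q
  simp only [polytopePα, polytopeP] at hthree
  simp only [hP, hPα, hthree, nsmul_eq_mul]
  field_simp
  norm_num
end
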